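/- arXiv:2104.08309 — 2 statements merged into one kernel-verified Lean document; each statement's English description precedes it below -/
import Mathlib

section
/- Let Q = (Qx, Qy) ∈ ℝ² be nonzero, let r₀ = (x₀, y₀) and r₁ = (x₁, y₁) be points of ℝ² with d := r₁ − r₀ ≠ 0, and let n̂ := ((y₁−y₀)/|d|, (x₀−x₁)/|d|) be the unit normal to the segment. If Q·d ≠ 0, then the line integral of F·n̂ along the segment, namely ∫₀¹ (F(r₀ + t·d) · n̂) · |d| dt, equals (−(Q·n̂)·|d|/|Q|²) · (exp(i Q·r₁) − exp(i Q·r₀)) / (Q·d). -/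
section PlaneWave

open Complex
open scoped RealInnerProductSpace

theorem real_inner_fin_two (u v : EuclideanSpace ℝ (Fin 2)) : ⟪u, v⟫ = u 0 * v 0 + u 1 * v 1 := by
  simp [PiLp.inner_apply, mul_comm]

theorem integral_exp_add_smul (z : ℂ) {w : ℂ} (hw : w ≠ 0) :
    ∫ t in (0 : ℝ)..1, exp (z + t • w) = (exp (z + w) - exp z) / w := by
  rw [eq_div_iff hw, mul_comm, ← smul_eq_mul]
  exact intervalIntegral.integral_unitInterval_deriv_eq_sub (by fun_prop)
    fun t _ ↦ hasDerivAt_exp (z + t • w)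

variable {E : Type*} [NormedAddCommGroup E] [InnerProductSpace ℝ E] {q r₀ r₁ : E}

theorem integral_exp_I_mul_inner_segment (h : ⟪q, r₁ - r₀⟫ ≠ 0) :
    ∫ t in (0 : ℝ)..1, exp (I * (⟪q, r₀ + t • (r₁ - r₀)⟫ : ℝ)) =
      (exp (I * (⟪q, r₁⟫ : ℝ)) - exp (I * (⟪q, r₀⟫ : ℝ))) / (I * (⟪q, r₁ - r₀⟫ : ℝ)) := by
  have phase_affine (t : ℝ) : I * (⟪q, r₀ + t • (r₁ - r₀)⟫ : ℝ) =
      I * (⟪q, r₀⟫ : ℝ) + t • (I * (⟪q, r₁ - r₀⟫ : ℝ)) := by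
    rw [inner_add_right, real_inner_smul_right, real_smul]
    push_cast
    ring
  have phase_end : I * (⟪q, r₁⟫ : ℝ) = I * (⟪q, r₀⟫ : ℝ) + I * (⟪q, r₁ - r₀⟫ : ℝ) := by
    simpa using phase_affine 1
  simp only [phase_affine, phase_end]
  exact integral_exp_add_smul _ (mul_ne_zero I_ne_zero (ofReal_ne_zero.mpr h))

/-- `E` is not complexified: the factors of the integrand other than `‖r₁ - r₀‖` are the pairing
with `n` of the field `F x = (-i / ‖q‖ ^ 2) • exp (i ⟪q, x⟫) • q`. -/
theorem segment_line_integral_of_F_general (n : E) (h : ⟪q, r₁ - r₀⟫ ≠ 0) :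
    ∫ t in (0 : ℝ)..1,
        (-I / (‖q‖ ^ 2 : ℝ) * (⟪q, n⟫ : ℝ) *
          exp (I * (⟪q, r₀ + t • (r₁ - r₀)⟫ : ℝ))) * (‖r₁ - r₀‖ : ℝ) =
      (-⟪q, n⟫ * ‖r₁ - r₀‖ / ‖q‖ ^ 2 : ℝ) *
        (exp (I * (⟪q, r₁⟫ : ℝ)) - exp (I * (⟪q, r₀⟫ : ℝ))) /
        (⟪q, r₁ - r₀⟫ : ℝ) := by
  rw [intervalIntegral.integral_mul_const, intervalIntegral.integral_const_mul,
    integral_exp_I_mul_inner_segment h]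
  push_cast
  field_simp

end PlaneWave

/-- Let `Q = (Qx, Qy) ∈ ℝ²` be nonzero and define the complex
vector field `F(x,y) = (−i/(Qx²+Qy²)) · (Qx, Qy) · exp(i(Qx·x + Qy·y))`.
Let `r₀ = (x₀,y₀)`, `r₁ = (x₁,y₁)` with `d := r₁ − r₀ ≠ 0`, let
`n̂ := ((y₁−y₀)/|d|, (x₀−x₁)/|d|)` be the unit normal to the segment, and assume
`Q·d ≠ 0`.  Then `∫₀¹ (F(r₀ + t·d) · n̂) · |d| dt
 = (−(Q·n̂)·|d|/|Q|²) · (exp(i Q·r₁) − exp(i Q·r₀)) / (Q·d)`. -/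
theorem segment_line_integral_of_F (Qx Qy x₀ y₀ x₁ y₁ : ℝ)
    (hQ : (Qx, Qy) ≠ (0, 0)) (hd : (x₁, y₁) ≠ (x₀, y₀))
    (hQd : Qx * (x₁ - x₀) + Qy * (y₁ - y₀) ≠ 0)
    (len : ℝ) (hlen : len = Real.sqrt ((x₁ - x₀) ^ 2 + (y₁ - y₀) ^ 2)) :
    (∫ t in (0:ℝ)..1,
        ((-Complex.I / ((Qx ^ 2 + Qy ^ 2 : ℝ) : ℂ)) *
            ((Qx * ((y₁ - y₀) / len) + Qy * ((x₀ - x₁) / len) : ℝ) : ℂ) *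
            Complex.exp (Complex.I *
              ((Qx * (x₀ + t * (x₁ - x₀)) + Qy * (y₀ + t * (y₁ - y₀)) : ℝ) : ℂ))) *
          (len : ℂ)) =
      ((-(Qx * ((y₁ - y₀) / len) + Qy * ((x₀ - x₁) / len)) * len /
          (Qx ^ 2 + Qy ^ 2) : ℝ) : ℂ) *
        (Complex.exp (Complex.I * ((Qx * x₁ + Qy * y₁ : ℝ) : ℂ)) -
          Complex.exp (Complex.I * ((Qx * x₀ + Qy * y₀ : ℝ) : ℂ))) /
        ((Qx * (x₁ - x₀) + Qy * (y₁ - y₀) : ℝ) : ℂ) := by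
  have norm_segment : ‖!₂[x₁, y₁] - !₂[x₀, y₀]‖ = len := by
    simp [hlen, EuclideanSpace.norm_eq]
  simpa [real_inner_fin_two, norm_segment, EuclideanSpace.real_norm_sq_eq] using
    segment_line_integral_of_F_general (q := !₂[Qx, Qy]) (r₀ := !₂[x₀, y₀]) (r₁ := !₂[x₁, y₁])
      !₂[(y₁ - y₀) / len, (x₀ - x₁) / len] (by simpa [real_inner_fin_two] using hQd)
end

section
/- Let v₀, v₁, v₂ ∈ ℝ² be counterclockwise oriented, i.e. the determinant of (v₁ − v₀, v₂ − v₀) is positive, and let Q ∈ ℝ² be nonzero with Q·(v_{l+1} − v_l) ≠ 0 for each l = 0, 1, 2 (indices mod 3). Setting d_l := v_{l+1} − v_l and n̂_l := ((d_l)_y, −(d_l)_x)/|d_l|, the integral of exp(i Q·r) over the convex hull of {v₀, v₁, v₂} equals Σ_{l=0}^{2} (−(Q·n̂_l)·|d_l|/|Q|²) · (exp(i Q·v_{l+1}) − exp(i Q·v_l)) / (Q·d_l). -/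
/-- The closed-form contribution of the directed segment from `p` to `q` in the
vertex-sum formula: `(−(Q·n̂)·|d|/|Q|²) · (exp(i Q·q) − exp(i Q·p)) / (Q·d)` where
`d = q − p` and `n̂ = (d_y, −d_x)/|d|` is the outward unit normal. -/
noncomputable def segTerm2D (Qx Qy : ℝ) (p q : ℝ × ℝ) : ℂ :=
  let dx : ℝ := q.1 - p.1
  let dy : ℝ := q.2 - p.2
  let len : ℝ := Real.sqrt (dx ^ 2 + dy ^ 2)
  ((-(Qx * (dy / len) + Qy * (-dx / len)) * len / (Qx ^ 2 + Qy ^ 2) : ℝ) : ℂ) *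
    (Complex.exp (Complex.I * ((Qx * q.1 + Qy * q.2 : ℝ) : ℂ)) -
      Complex.exp (Complex.I * ((Qx * p.1 + Qy * p.2 : ℝ) : ℂ))) /
    ((Qx * dx + Qy * dy : ℝ) : ℂ)

/-!
Write `θ_l = Q·v_l` and `κ_l = Q × v_l`. On the triangle the integrand is `f''(Q·r)` with
`f θ = -exp(iθ)`, so pulling back to the unit triangle and integrating twice (Hermite–Genocchi)
gives `|D|` times the second divided difference of `f` at `θ₀, θ₁, θ₂`, where
`D = det(v₁ − v₀, v₂ − v₀)`. Since `(θ, κ)` are `|Q|` times orthonormal coordinates, `|Q|² D` is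
the determinant of the triangle in these coordinates, and that determinant times the second
divided difference is the sum of `(κ_{l+1} − κ_l) f[θ_l, θ_{l+1}]` over the edges.
-/

open MeasureTheory Set

section Slope

variable {k E : Type*} [Field k] [AddCommGroup E] [Module k E]

theorem det_smul_slope_slope_eq_sum_edges (f : k → E) {θ₀ θ₁ θ₂ : k} (h : θ₀ ≠ θ₂)
    (κ₀ κ₁ κ₂ : k) :
    ((θ₁ - θ₀) * (κ₂ - κ₀) - (κ₁ - κ₀) * (θ₂ - θ₀)) • slope (slope f θ₁) θ₀ θ₂ =
      (κ₁ - κ₀) • slope f θ₀ θ₁ + (κ₂ - κ₁) • slope f θ₁ θ₂ + (κ₀ - κ₂) • slope f θ₂ θ₀ := by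
  have hne : θ₂ - θ₀ ≠ 0 := sub_ne_zero.2 h.symm
  rw [slope_comm f θ₂ θ₀, ← sub_div_sub_smul_slope_add_sub_div_sub_smul_slope f θ₀ θ₁ θ₂,
    slope_def_module (slope f θ₁), slope_comm f θ₁ θ₀]
  match_scalars <;> field_simp <;> ring

end Slope

section HermiteGenocchi

variable {E : Type*} [NormedAddCommGroup E] [NormedSpace ℝ E]

/-- The closed right triangle with vertices `(0, 0)`, `(1, 0)`, `(0, 1)`, the parameter domain
over which triangle integrals are computed as iterated integrals. -/
def unitTriangle : Set (ℝ × ℝ) := {p | 0 ≤ p.1 ∧ 0 ≤ p.2 ∧ p.1 + p.2 ≤ 1}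

theorem unitTriangle_eq_convexHull :
    unitTriangle = convexHull ℝ {((0 : ℝ), (0 : ℝ)), (1, 0), (0, 1)} := by
  refine Subset.antisymm ?_ (convexHull_min ?_ ?_)
  · rintro ⟨s, t⟩ ⟨hs, ht, hst⟩
    have hcomb := (convex_convexHull ℝ {((0 : ℝ), (0 : ℝ)), (1, 0), (0, 1)}).sum_mem
      (t := Finset.univ) (w := ![1 - s - t, s, t]) (z := ![(0, 0), (1, 0), (0, 1)])
      (by simpa [Fin.forall_fin_succ, hs, ht, le_sub_iff_add_le'] using hst)
      (by simp only [Fin.sum_univ_three, Matrix.cons_val]; ring)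
      (fun i _ => subset_convexHull ℝ _ (by fin_cases i <;> simp))
    simpa [Fin.sum_univ_three] using hcomb
  · rintro _ (rfl | rfl | rfl) <;> simp [unitTriangle]
  · exact (convex_halfSpace_ge (LinearMap.fst ℝ ℝ ℝ).isLinear 0).inter
      ((convex_halfSpace_ge (LinearMap.snd ℝ ℝ ℝ).isLinear 0).inter
        (convex_halfSpace_le (LinearMap.fst ℝ ℝ ℝ + LinearMap.snd ℝ ℝ ℝ).isLinear 1))

theorem isCompact_unitTriangle : IsCompact unitTriangle := by
  rw [unitTriangle_eq_convexHull]
  exact (Set.toFinite _).isCompact_convexHull ℝ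

theorem setIntegral_unitTriangle_eq_iterated {f : ℝ × ℝ → E} (hf : IntegrableOn f unitTriangle) :
    ∫ p in unitTriangle, f p = ∫ s in (0 : ℝ)..1, ∫ t in (0 : ℝ)..1 - s, f (s, t) := by
  have hmeas : MeasurableSet unitTriangle := isCompact_unitTriangle.measurableSet
  have hslice (s : ℝ) : ∫ t, unitTriangle.indicator f (s, t) =
      (Icc 0 1).indicator (fun s => ∫ t in (0 : ℝ)..1 - s, f (s, t)) s := by
    by_cases hs : s ∈ Icc (0 : ℝ) 1
    · have hmem (t : ℝ) : (s, t) ∈ unitTriangle ↔ t ∈ Icc 0 (1 - s) := by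
        simp [unitTriangle, hs.1, le_sub_iff_add_le']
      rw [indicator_of_mem hs, intervalIntegral.integral_of_le (by linarith [hs.2]),
        ← integral_Icc_eq_integral_Ioc, ← integral_indicator measurableSet_Icc]
      simp only [indicator, hmem]
    · have hnotMem (t : ℝ) : (s, t) ∉ unitTriangle := fun ⟨h₁, h₂, h₃⟩ =>
        hs ⟨h₁, (le_add_of_nonneg_right h₂).trans h₃⟩
      simp [indicator, hs, hnotMem]
  calc ∫ p in unitTriangle, f p
      = ∫ s, ∫ t, unitTriangle.indicator f (s, t) := by
        rw [← integral_indicator hmeas, Measure.volume_eq_prod, integral_prod]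
        exact (integrable_indicator_iff hmeas).2 hf
    _ = ∫ s in (0 : ℝ)..1, ∫ t in (0 : ℝ)..1 - s, f (s, t) := by
        simp_rw [hslice]
        rw [integral_indicator measurableSet_Icc, integral_Icc_eq_integral_Ioc,
          intervalIntegral.integral_of_le zero_le_one]

variable [CompleteSpace E] {f f' f'' : ℝ → E}

theorem integral_comp_add_sub_mul_eq_slope (hf : ∀ x, HasDerivAt f (f' x) x) (hf' : Continuous f')
    {a b : ℝ} (hab : a ≠ b) :
    ∫ s in (0 : ℝ)..1, f' (a + (b - a) * s) = slope f a b := by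
  rw [intervalIntegral.integral_comp_add_mul _ (sub_ne_zero.2 hab.symm),
    intervalIntegral.integral_eq_sub_of_hasDerivAt (fun x _ => hf x)
      (hf'.intervalIntegrable _ _), slope_def_module]
  simp

theorem setIntegral_unitTriangle_comp_eq_slope_slope (hf : ∀ x, HasDerivAt f (f' x) x)
    (hf' : ∀ x, HasDerivAt f' (f'' x) x) (hf'' : Continuous f'') {θ₀ θ₁ θ₂ : ℝ}
    (h₀₁ : θ₀ ≠ θ₁) (h₁₂ : θ₁ ≠ θ₂) (h₀₂ : θ₀ ≠ θ₂) :
    ∫ p in unitTriangle, f'' (θ₀ + (p.1 * (θ₁ - θ₀) + p.2 * (θ₂ - θ₀))) =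
      slope (slope f θ₁) θ₀ θ₂ := by
  have hcont' : Continuous f' := continuous_iff_continuousAt.2 fun x => (hf' x).continuousAt
  have hinner (s : ℝ) :
      ∫ t in (0 : ℝ)..1 - s, f'' (θ₀ + (s * (θ₁ - θ₀) + t * (θ₂ - θ₀))) =
        (θ₂ - θ₀)⁻¹ • (f' (θ₂ + (θ₁ - θ₂) * s) - f' (θ₀ + (θ₁ - θ₀) * s)) := by
    have hftc := intervalIntegral.integral_comp_add_mul (a := 0) (b := 1 - s) f''
      (sub_ne_zero.2 h₀₂.symm) (θ₀ + (θ₁ - θ₀) * s)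
    rw [intervalIntegral.integral_eq_sub_of_hasDerivAt (fun x _ => hf' x)
      (hf''.intervalIntegrable _ _)] at hftc
    convert hftc using 4 <;> ring_nf
  rw [setIntegral_unitTriangle_eq_iterated
    (ContinuousOn.integrableOn_compact isCompact_unitTriangle (by fun_prop))]
  simp_rw [hinner]
  rw [intervalIntegral.integral_smul, intervalIntegral.integral_sub
      (Continuous.intervalIntegrable (by fun_prop) _ _)
      (Continuous.intervalIntegrable (by fun_prop) _ _),
    integral_comp_add_sub_mul_eq_slope hf hcont' h₁₂.symm,
    integral_comp_add_sub_mul_eq_slope hf hcont' h₀₁,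
    slope_def_module (slope f θ₁), slope_comm f θ₁ θ₂, slope_comm f θ₁ θ₀]

end HermiteGenocchi

section Triangle

theorem setIntegral_image_affineMap {E F : Type*} [NormedAddCommGroup E] [NormedSpace ℝ E]
    [FiniteDimensional ℝ E] [MeasurableSpace E] [BorelSpace E] (μ : Measure E)
    [μ.IsAddHaarMeasure] [NormedAddCommGroup F] [NormedSpace ℝ F] (A : E →ᵃ[ℝ] E) {s : Set E}
    (hs : MeasurableSet s) (g : E → F) :
    ∫ x in A '' s, g x ∂μ = |A.linear.det| • ∫ x in s, g (A x) ∂μ := by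
  have hderiv (x : E) (_ : x ∈ s) : HasFDerivWithinAt A A.linear.toContinuousLinearMap s x := by
    rw [A.decomp]
    exact A.linear.toContinuousLinearMap.hasFDerivWithinAt.add_const _
  by_cases hdet : A.linear.det = 0
  · have hnull : μ (A '' s) = 0 :=
      addHaar_image_eq_zero_of_det_fderivWithin_eq_zero μ hderiv fun _ _ => by simpa using hdet
    simp [Measure.restrict_eq_zero.2 hnull, hdet]
  · have hinj : Function.Injective A := A.linear_injective_iff.1
      (LinearMap.equivOfDetNeZero A.linear hdet).injective
    rw [integral_image_eq_integral_abs_det_fderiv_smul μ hs hderiv hinj.injOn, integral_smul]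
    simp

variable {V W : Type*} [AddCommGroup V] [Module ℝ V] [AddCommGroup W] [Module ℝ W]

/-- The affine map sending the vertices `(0, 0)`, `(1, 0)`, `(0, 1)` of `unitTriangle` to
`v₀`, `v₁`, `v₂`, which parametrises the triangle they span. -/
def triangleParam (v₀ v₁ v₂ : V) : ℝ × ℝ →ᵃ[ℝ] V :=
  AffineMap.const ℝ (ℝ × ℝ) v₀ + ((LinearMap.toSpanSingleton ℝ V (v₁ - v₀)).coprod
    (LinearMap.toSpanSingleton ℝ V (v₂ - v₀))).toAffineMap

theorem triangleParam_apply (v₀ v₁ v₂ : V) (p : ℝ × ℝ) :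
    triangleParam v₀ v₁ v₂ p = v₀ + (p.1 • (v₁ - v₀) + p.2 • (v₂ - v₀)) := by
  simp [triangleParam]

theorem comp_triangleParam (g : V →ᵃ[ℝ] W) (v₀ v₁ v₂ : V) :
    g.comp (triangleParam v₀ v₁ v₂) = triangleParam (g v₀) (g v₁) (g v₂) := by
  ext p
  rw [AffineMap.comp_apply, triangleParam_apply, triangleParam_apply, add_comm v₀, ← vadd_eq_add,
    g.map_vadd, map_add, map_smul, map_smul]
  simp only [← vsub_eq_sub, g.linearMap_vsub, vadd_eq_add, add_comm]

theorem triangleParam_image_unitTriangle (v₀ v₁ v₂ : V) :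
    triangleParam v₀ v₁ v₂ '' unitTriangle = convexHull ℝ {v₀, v₁, v₂} := by
  rw [unitTriangle_eq_convexHull, AffineMap.image_convexHull]
  simp [image_insert_eq, triangleParam_apply]

theorem det_linear_triangleParam (v₀ v₁ v₂ : ℝ × ℝ) :
    (triangleParam v₀ v₁ v₂).linear.det =
      (v₁.1 - v₀.1) * (v₂.2 - v₀.2) - (v₁.2 - v₀.2) * (v₂.1 - v₀.1) := by
  rw [← LinearMap.det_toMatrix (Module.Basis.finTwoProd ℝ), Matrix.det_fin_two]
  simp [triangleParam, LinearMap.toMatrix_apply, mul_comm]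

theorem setIntegral_convexHull_triple_comp_affineMap {E : Type*} [NormedAddCommGroup E]
    [NormedSpace ℝ E] [CompleteSpace E] {f f' f'' : ℝ → E} (hf : ∀ x, HasDerivAt f (f' x) x)
    (hf' : ∀ x, HasDerivAt f' (f'' x) x) (hf'' : Continuous f'') (ℓ : ℝ × ℝ →ᵃ[ℝ] ℝ)
    {v₀ v₁ v₂ : ℝ × ℝ} (h₀₁ : ℓ v₀ ≠ ℓ v₁) (h₁₂ : ℓ v₁ ≠ ℓ v₂) (h₀₂ : ℓ v₀ ≠ ℓ v₂) :
    ∫ r in convexHull ℝ {v₀, v₁, v₂}, f'' (ℓ r) =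
      |(v₁.1 - v₀.1) * (v₂.2 - v₀.2) - (v₁.2 - v₀.2) * (v₂.1 - v₀.1)| •
        slope (slope f (ℓ v₁)) (ℓ v₀) (ℓ v₂) := by
  rw [← triangleParam_image_unitTriangle,
    setIntegral_image_affineMap _ _ isCompact_unitTriangle.measurableSet, det_linear_triangleParam,
    ← setIntegral_unitTriangle_comp_eq_slope_slope hf hf' hf'' h₀₁ h₁₂ h₀₂]
  simp_rw [← AffineMap.comp_apply, comp_triangleParam, triangleParam_apply, smul_eq_mul]

end Triangle

section Fourier

open Complex

theorem hasDerivAt_exp_I_mul_ofReal (θ : ℝ) :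
    HasDerivAt (fun θ : ℝ => exp (I * θ)) (I * exp (I * θ)) θ := by
  simpa [mul_comm] using ((hasDerivAt_id (θ : ℂ)).const_mul I).cexp.comp_ofReal

theorem setIntegral_convexHull_triple_exp {v₀ v₁ v₂ : ℝ × ℝ} {Qx Qy : ℝ}
    (h₀₁ : Qx * v₀.1 + Qy * v₀.2 ≠ Qx * v₁.1 + Qy * v₁.2)
    (h₁₂ : Qx * v₁.1 + Qy * v₁.2 ≠ Qx * v₂.1 + Qy * v₂.2)
    (h₀₂ : Qx * v₀.1 + Qy * v₀.2 ≠ Qx * v₂.1 + Qy * v₂.2) :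
    ∫ r in convexHull ℝ {v₀, v₁, v₂}, exp (I * ((Qx * r.1 + Qy * r.2 : ℝ) : ℂ)) =
      |(v₁.1 - v₀.1) * (v₂.2 - v₀.2) - (v₁.2 - v₀.2) * (v₂.1 - v₀.1)| •
        slope (slope (fun θ : ℝ => -exp (I * θ)) (Qx * v₁.1 + Qy * v₁.2))
          (Qx * v₀.1 + Qy * v₀.2) (Qx * v₂.1 + Qy * v₂.2) := by
  have hf (θ : ℝ) : HasDerivAt (fun θ : ℝ => -exp (I * θ)) (-(I * exp (I * θ))) θ :=
    (hasDerivAt_exp_I_mul_ofReal θ).fun_neg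
  have hf' (θ : ℝ) : HasDerivAt (fun θ : ℝ => -(I * exp (I * θ))) (exp (I * θ)) θ := by
    simpa [← mul_assoc] using ((hasDerivAt_exp_I_mul_ofReal θ).const_mul I).fun_neg
  exact setIntegral_convexHull_triple_comp_affineMap hf hf' (by fun_prop)
    (Qx • LinearMap.fst ℝ ℝ ℝ + Qy • LinearMap.snd ℝ ℝ ℝ).toAffineMap h₀₁ h₁₂ h₀₂

theorem dot_unitNormal_mul_length (a b x y : ℝ) :
    (a * (y / √(x ^ 2 + y ^ 2)) + b * (-x / √(x ^ 2 + y ^ 2))) * √(x ^ 2 + y ^ 2) =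
      a * y - b * x := by
  -- For `x = y = 0` the divisions by zero are harmless: both sides vanish.
  have hzero : √(x ^ 2 + y ^ 2) = 0 → x = 0 ∧ y = 0 := fun h => by
    rw [Real.sqrt_eq_zero (by positivity),
      add_eq_zero_iff_of_nonneg (sq_nonneg x) (sq_nonneg y)] at h
    simpa using h
  rw [add_mul, mul_assoc, mul_assoc, div_mul_cancel_of_imp fun h => (hzero h).2,
    div_mul_cancel_of_imp fun h => neg_eq_zero.2 (hzero h).1]
  ring

theorem segTerm2D_eq_smul_slope (Qx Qy : ℝ) (p q : ℝ × ℝ) :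
    segTerm2D Qx Qy p q =
      (Qx ^ 2 + Qy ^ 2)⁻¹ • (((Qx * q.2 - Qy * q.1) - (Qx * p.2 - Qy * p.1)) •
        slope (fun θ : ℝ => -exp (I * θ)) (Qx * p.1 + Qy * p.2) (Qx * q.1 + Qy * q.2)) := by
  have hnormal := dot_unitNormal_mul_length Qx Qy (q.1 - p.1) (q.2 - p.2)
  simp only [segTerm2D, neg_mul, hnormal, slope_def_module, real_smul]
  push_cast
  ring_nf

theorem triangle_fourier_transform_vertex_sum_general (v₀ v₁ v₂ : ℝ × ℝ) (Qx Qy : ℝ)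
    (hQd₀ : Qx * (v₁.1 - v₀.1) + Qy * (v₁.2 - v₀.2) ≠ 0)
    (hQd₁ : Qx * (v₂.1 - v₁.1) + Qy * (v₂.2 - v₁.2) ≠ 0)
    (hQd₂ : Qx * (v₀.1 - v₂.1) + Qy * (v₀.2 - v₂.2) ≠ 0) :
    (SignType.sign ((v₁.1 - v₀.1) * (v₂.2 - v₀.2) - (v₁.2 - v₀.2) * (v₂.1 - v₀.1)) : ℝ) •
      (∫ r in convexHull ℝ {v₀, v₁, v₂}, exp (I * ((Qx * r.1 + Qy * r.2 : ℝ) : ℂ))) =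
      segTerm2D Qx Qy v₀ v₁ + segTerm2D Qx Qy v₁ v₂ + segTerm2D Qx Qy v₂ v₀ := by
  have hQ : Qx ^ 2 + Qy ^ 2 ≠ 0 := fun h => hQd₀ <| by
    obtain ⟨hx, hy⟩ := (add_eq_zero_iff_of_nonneg (sq_nonneg Qx) (sq_nonneg Qy)).1 h
    simp [pow_eq_zero_iff two_ne_zero |>.1 hx, pow_eq_zero_iff two_ne_zero |>.1 hy]
  rw [setIntegral_convexHull_triple_exp (by grind) (by grind) (by grind), smul_smul, sign_mul_abs]
  simp only [segTerm2D_eq_smul_slope, ← smul_add]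
  rw [← det_smul_slope_slope_eq_sum_edges _ (by grind), smul_smul]
  congr 1
  field_simp
  ring

end Fourier

/-- Let `v₀, v₁, v₂ ∈ ℝ²` be counterclockwise oriented
(`det(v₁ − v₀, v₂ − v₀) > 0`), and let `Q = (Qx, Qy) ∈ ℝ²` be nonzero with
`Q·(v_{l+1} − v_l) ≠ 0` for each of the three directed edges.  Then the integral
of `exp(i Q·r)` over the closed triangle `conv{v₀, v₁, v₂}` (with respect to
Lebesgue measure on `ℝ²`) equals the sum over the three directed edges of
`(−(Q·n̂_l)·|d_l|/|Q|²) · (exp(i Q·v_{l+1}) − exp(i Q·v_l)) / (Q·d_l)`. -/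
theorem triangle_fourier_transform_vertex_sum (v₀ v₁ v₂ : ℝ × ℝ) (Qx Qy : ℝ)
    (hccw : 0 < (v₁.1 - v₀.1) * (v₂.2 - v₀.2) - (v₁.2 - v₀.2) * (v₂.1 - v₀.1))
    (hQ : (Qx, Qy) ≠ (0, 0))
    (hQd₀ : Qx * (v₁.1 - v₀.1) + Qy * (v₁.2 - v₀.2) ≠ 0)
    (hQd₁ : Qx * (v₂.1 - v₁.1) + Qy * (v₂.2 - v₁.2) ≠ 0)
    (hQd₂ : Qx * (v₀.1 - v₂.1) + Qy * (v₀.2 - v₂.2) ≠ 0) :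
    (∫ r in convexHull ℝ {v₀, v₁, v₂},
        Complex.exp (Complex.I * ((Qx * r.1 + Qy * r.2 : ℝ) : ℂ))) =
      segTerm2D Qx Qy v₀ v₁ + segTerm2D Qx Qy v₁ v₂ + segTerm2D Qx Qy v₂ v₀ := by
  simpa [sign_pos hccw] using
    triangle_fourier_transform_vertex_sum_general v₀ v₁ v₂ Qx Qy hQd₀ hQd₁ hQd₂
end
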